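/- Let f ∈ ℂ[x,y,z] be a homogeneous polynomial of degree d > 1 having an isolated singularity at the origin, i.e. the only common zero of f_x, f_y, f_z in ℂ³ is (0,0,0). Then the Brieskorn module B(f) = ℂ[x,y,z]/E_f, regarded as a module over ℂ[t] with t acting by multiplication by f, is a free ℂ[t]-module of rank μ(f) = dim_ℂ(ℂ[x,y,z]/J_f) (the Milnor number of f at the origin). -/

import Mathlib

open MvPolynomial

/-- The linear map `(P,Q,R) ↦ f_x(R_y − Q_z) + f_y(P_z − R_x) + f_z(Q_x − P_y)`
whose range is `E_f`. -/
noncomputable def Emap (f : MvPolynomial (Fin 3) ℂ) :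
    (MvPolynomial (Fin 3) ℂ × MvPolynomial (Fin 3) ℂ × MvPolynomial (Fin 3) ℂ) →ₗ[ℂ]
      MvPolynomial (Fin 3) ℂ where
  toFun P := pderiv 0 f * (pderiv 1 P.2.2 - pderiv 2 P.2.1) +
             pderiv 1 f * (pderiv 2 P.1 - pderiv 0 P.2.2) +
             pderiv 2 f * (pderiv 0 P.2.1 - pderiv 1 P.1)
  map_add' P Q := by simp only [Prod.fst_add, Prod.snd_add, map_add]; ring
  map_smul' c P := by
    simp only [Prod.smul_fst, Prod.smul_snd, Derivation.map_smul, RingHom.id_apply,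
      ← smul_sub, mul_smul_comm, ← smul_add]

/-- `E_f` as a `ℂ`-subspace of `ℂ[x,y,z]`. -/
noncomputable def Esub (f : MvPolynomial (Fin 3) ℂ) :
    Submodule ℂ (MvPolynomial (Fin 3) ℂ) :=
  LinearMap.range (Emap f)

lemma mulLeft_le_comap_Esub (f : MvPolynomial (Fin 3) ℂ) :
    Esub f ≤ (Esub f).comap (LinearMap.mulLeft ℂ f) := by
  rintro w ⟨⟨P, Q, R⟩, rfl⟩
  refine ⟨⟨f * P, f * Q, f * R⟩, ?_⟩
  simp only [Emap, LinearMap.coe_mk, AddHom.coe_mk, Submodule.mem_comap,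
    LinearMap.mulLeft_apply, pderiv_mul]
  ring

/-- Multiplication by `f` on the Brieskorn module `B(f) = ℂ[x,y,z]/E_f`
(the action of `t`). -/
noncomputable def Bmul (f : MvPolynomial (Fin 3) ℂ) :
    (MvPolynomial (Fin 3) ℂ ⧸ Esub f) →ₗ[ℂ] (MvPolynomial (Fin 3) ℂ ⧸ Esub f) :=
  Submodule.mapQ (Esub f) (Esub f) (LinearMap.mulLeft ℂ f) (mulLeft_le_comap_Esub f)

/-!
Write `∇f` for the gradient of `f`, `x` for the vector field `(x, y, z)` and `F` for `(P, Q, R)`, so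
that `E_f` consists of the polynomials `∇f · curl F`. Euler's identity is `∇f · x = d f`.

*Torsion-freeness.* If `f g = ∇f · curl F`, then `g x - d curl F` is orthogonal to `∇f`. Since `J_f`
contains powers of all three variables, the Koszul complex of `∇f` is exact there, so this vector
field is `∇f × G` for some `G`. Taking divergences for `g` homogeneous of degree `m` gives
`(m + 3) g = -∇f · curl G ∈ E_f`. Hence multiplication by `f` is injective on `B(f)`.

*Generation.* If the components of `F` are homogeneous of degree `n`, then
`curl (F × x) = (n + 2) F - (div F) x`, so `(n + 2) ∇f · F` and `d f div F` agree modulo `E_f`. As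
`div F` has lower degree than `∇f · F`, induction on the degree shows that monomials representing a
basis of `S / J_f` generate `B(f)` over `ℂ[t]`.

*Independence.* By Euler's identity `t` acts as zero on `S / J_f`, so the constant coefficients of
a `ℂ[t]`-linear relation between these monomials vanish. Torsion-freeness allows dividing the
relation by `t`, and so all coefficients vanish.
-/

open scoped Matrix

section Koszul

-- With `x`, `y`, `z` equal to `α ⬝ᵥ a`, `β ⬝ᵥ a`, `γ ⬝ᵥ a`, the `⨯₃`-multiples of `α`, `β`, `γ` are
-- null-homotopies of multiplication by `x`, `y`, `z` on the Koszul complex of `a`; regularity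
-- then allows dividing by `z`, `y` and `x` in turn.
theorem exists_eq_crossProduct_of_dotProduct_eq_zero {R : Type*} [CommRing R] {a : Fin 3 → R}
    {x y z : R} (hxa : x ∈ Ideal.span (Set.range a)) (hya : y ∈ Ideal.span (Set.range a))
    (hza : z ∈ Ideal.span (Set.range a)) (hx : IsSMulRegular R x)
    (hy : ∀ t, y * t ∈ Ideal.span {x} → t ∈ Ideal.span {x})
    (hz : ∀ t, z * t ∈ Ideal.span {x, y} → t ∈ Ideal.span {x, y})
    {u : Fin 3 → R} (hu : a ⬝ᵥ u = 0) : ∃ w, u = a ⨯₃ w := by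
  obtain ⟨α, hα : α ⬝ᵥ a = x⟩ := Ideal.mem_span_range_iff_exists_fun.1 hxa
  obtain ⟨β, hβ : β ⬝ᵥ a = y⟩ := Ideal.mem_span_range_iff_exists_fun.1 hya
  obtain ⟨γ, hγ : γ ⬝ᵥ a = z⟩ := Ideal.mem_span_range_iff_exists_fun.1 hza
  obtain ⟨v, hv⟩ : ∃ v, x • u = a ⨯₃ v :=
    ⟨u ⨯₃ α, by
      rw [cross_cross_eq_smul_sub_smul', dotProduct_comm u, hu, dotProduct_comm, hα, zero_smul,
        sub_zero]⟩
  have hyv : y • v = (β ⬝ᵥ v) • a - x • (β ⨯₃ u) := by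
    rw [← map_smul, hv, cross_cross_eq_smul_sub_smul', sub_sub_cancel, dotProduct_comm, hβ]
  have hzβv : z * β ⬝ᵥ v ∈ Ideal.span {x, y} :=
    Ideal.mem_span_pair.2 ⟨γ ⬝ᵥ β ⨯₃ u, γ ⬝ᵥ v, by
      have := congrArg (γ ⬝ᵥ ·) hyv
      simp only [dotProduct_smul, dotProduct_sub, smul_eq_mul, hγ] at this
      linear_combination this⟩
  obtain ⟨p, q, hpq⟩ := Ideal.mem_span_pair.1 (hz _ hzβv)
  have hdvd (i) : ∃ w, v i - q * a i = x * w :=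
    Ideal.mem_span_singleton.1 <| hy _ <| Ideal.mem_span_singleton.2 ⟨p * a i - (β ⨯₃ u) i, by
      have := congrFun hyv i
      simp only [Pi.smul_apply, Pi.sub_apply, smul_eq_mul] at this
      linear_combination this - a i * hpq⟩
  choose w hw using hdvd
  have hvw : v = q • a + x • w := funext fun i => by simp [← hw]
  have hxu : x • u = x • (a ⨯₃ w) := by simp [hv, hvw]
  exact ⟨w, IsSMulRegular.pi (fun _ => hx) hxu⟩

theorem mem_span_X_pow_of_X_pow_mul_mem {σ R : Type*} [CommSemiring R] (n : σ → ℕ)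
    {s : Set σ} {j : σ} (hj : j ∉ s) {p : MvPolynomial σ R}
    (h : X j ^ n j * p ∈ Ideal.span ((fun i => X i ^ n i) '' s)) :
    p ∈ Ideal.span ((fun i => (X i : MvPolynomial σ R) ^ n i) '' s) := by
  have image_eq : (fun i => (X i : MvPolynomial σ R) ^ n i) '' s =
      (fun m => monomial m 1) '' ((fun i => Finsupp.single i (n i)) '' s) := by
    simp [Set.image_image, X_pow_eq_monomial]
  rw [image_eq, mem_ideal_span_monomial_image] at h ⊢
  intro m hm
  obtain ⟨_, ⟨i, hi, rfl⟩, hle⟩ := h (Finsupp.single j (n j) + m) (by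
    rwa [mem_support_iff, X_pow_eq_monomial, coeff_monomial_mul, one_mul, ← mem_support_iff])
  refine ⟨_, ⟨i, hi, rfl⟩, ?_⟩
  have hij : i ≠ j := ne_of_mem_of_not_mem hi hj
  rwa [Finsupp.single_le_iff, Finsupp.add_apply, Finsupp.single_eq_of_ne hij, zero_add,
    ← Finsupp.single_le_iff] at hle

theorem exists_eq_crossProduct_of_X_mem_radical {R : Type*} [CommRing R]
    {a : Fin 3 → MvPolynomial (Fin 3) R}
    (ha : ∀ i, X i ∈ (Ideal.span (Set.range a)).radical)
    {u : Fin 3 → MvPolynomial (Fin 3) R} (hu : a ⬝ᵥ u = 0) : ∃ w, u = a ⨯₃ w := by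
  choose n hn using ha
  refine exists_eq_crossProduct_of_dotProduct_eq_zero (hn 0) (hn 1) (hn 2) ?_ ?_ ?_ hu
  · refine isSMulRegular_iff_right_eq_zero_of_smul.2 fun t ht => ?_
    simpa using mem_span_X_pow_of_X_pow_mul_mem n (s := ∅) (j := 0) (p := t) (by simp)
      (by simpa using ht)
  · intro t ht
    simpa using mem_span_X_pow_of_X_pow_mul_mem n (s := {0}) (j := 1) (p := t) (by simp)
      (by simpa using ht)
  · intro t ht
    simpa [Set.image_pair] using mem_span_X_pow_of_X_pow_mul_mem n (s := {0, 1}) (j := 2) (p := t)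
      (by simp) (by simpa [Set.image_pair] using ht)

end Koszul

section Homogeneous

variable {σ R : Type*} [CommSemiring R]

theorem homogeneousComponent_pderiv (i : σ) (n : ℕ) (p : MvPolynomial σ R) :
    homogeneousComponent n (pderiv i p) = pderiv i (homogeneousComponent (n + 1) p) := by
  ext m
  simp [coeff_pderiv, coeff_homogeneousComponent]

attribute [local instance] MvPolynomial.gradedAlgebra in
theorem homogeneousComponent_mul_of_le {a p : MvPolynomial σ R} {k n : ℕ}
    (ha : a.IsHomogeneous k) (hkn : k ≤ n) :
    homogeneousComponent n (a * p) = a * homogeneousComponent (n - k) p := by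
  simpa only [← DirectSum.Decomposition.decompose'_eq, decomposition.decompose'_apply] using
    DirectSum.coe_decompose_mul_of_left_mem_of_le (homogeneousSubmodule σ R) (b := p) ha hkn

attribute [local instance] MvPolynomial.gradedAlgebra in
theorem homogeneousComponent_mul_of_lt {a p : MvPolynomial σ R} {k n : ℕ}
    (ha : a.IsHomogeneous k) (hnk : n < k) : homogeneousComponent n (a * p) = 0 := by
  simpa only [← DirectSum.Decomposition.decompose'_eq, decomposition.decompose'_apply] using
    DirectSum.coe_decompose_mul_of_left_mem_of_not_le (homogeneousSubmodule σ R) (b := p) ha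
      hnk.not_ge

theorem homogeneousComponent_dotProduct_of_le {ι : Type*} [Fintype ι] {a : ι → MvPolynomial σ R}
    {k n : ℕ} (ha : ∀ i, (a i).IsHomogeneous k) (hkn : k ≤ n) (F : ι → MvPolynomial σ R) :
    homogeneousComponent n (a ⬝ᵥ F) = a ⬝ᵥ (homogeneousComponent (n - k) ∘ F) := by
  simp only [dotProduct, map_sum, homogeneousComponent_mul_of_le (ha _) hkn, Function.comp_apply]

theorem homogeneousComponent_dotProduct_of_lt {ι : Type*} [Fintype ι] {a : ι → MvPolynomial σ R}
    {k n : ℕ} (ha : ∀ i, (a i).IsHomogeneous k) (hnk : n < k) (F : ι → MvPolynomial σ R) :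
    homogeneousComponent n (a ⬝ᵥ F) = 0 := by
  simp only [dotProduct, map_sum, homogeneousComponent_mul_of_lt (ha _) hnk, Finset.sum_const_zero]

theorem mem_of_forall_homogeneousComponent_mem {N : Submodule R (MvPolynomial σ R)}
    {p : MvPolynomial σ R} (h : ∀ n, homogeneousComponent n p ∈ N) : p ∈ N := by
  rw [← sum_homogeneousComponent p]
  exact N.sum_mem fun n _ => h n

theorem homogeneousComponent_mem_span {s : Set (MvPolynomial σ R)}
    (hs : ∀ m ∈ s, ∃ k, m.IsHomogeneous k) {p : MvPolynomial σ R} (hp : p ∈ Submodule.span R s)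
    (n : ℕ) : homogeneousComponent n p ∈ Submodule.span R s := by
  suffices Submodule.span R s ≤ (Submodule.span R s).comap (homogeneousComponent n) from this hp
  refine Submodule.span_le.2 fun m hm => ?_
  obtain ⟨k, hk⟩ := hs m hm
  rw [SetLike.mem_coe, Submodule.mem_comap, homogeneousComponent_of_mem hk]
  split_ifs
  exacts [Submodule.subset_span hm, zero_mem _]

end Homogeneous

section Freeness

theorem map_polynomial_smul_eq_coeff_zero_smul {R B W : Type*} [CommSemiring R] [AddCommMonoid B]
    [Module R B] [Module (Polynomial R) B] [IsScalarTower R (Polynomial R) B] [AddCommMonoid W]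
    [Module R W] {π : B →ₗ[R] W} (hπ : ∀ b, π ((Polynomial.X : Polynomial R) • b) = 0)
    (p : Polynomial R) (b : B) : π (p • b) = p.coeff 0 • π b := by
  nth_rw 1 [← Polynomial.X_mul_divX_add p]
  rw [add_smul, mul_smul, map_add, hπ, zero_add, ← Polynomial.algebraMap_eq, algebraMap_smul,
    map_smul]

theorem linearIndependent_polynomial_of_comp {R B W ι : Type*} [CommRing R] [AddCommGroup B]
    [Module R B] [Module (Polynomial R) B] [IsScalarTower R (Polynomial R) B] [AddCommGroup W]
    [Module R W] {π : B →ₗ[R] W} (hπ : ∀ b, π ((Polynomial.X : Polynomial R) • b) = 0)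
    (hX : IsSMulRegular B (Polynomial.X : Polynomial R)) {v : ι → B}
    (hv : LinearIndependent R (π ∘ v)) : LinearIndependent (Polynomial R) v := by
  refine linearIndependent_iff'.2 fun s => ?_
  have X_pow_dvd (n : ℕ) : ∀ c : ι → Polynomial R, ∑ i ∈ s, c i • v i = 0 →
      ∀ i ∈ s, Polynomial.X ^ n ∣ c i := by
    induction n with
    | zero => simp
    | succ n ih =>
      intro c hc
      have constantCoeff_eq_zero : ∀ i ∈ s, (c i).coeff 0 = 0 := by
        refine linearIndependent_iff'.1 hv s _ ?_
        simpa [map_polynomial_smul_eq_coeff_zero_smul hπ] using congrArg π hc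
      have hdivX : ∀ i ∈ s, c i = Polynomial.X * (c i).divX := fun i hi => by
        simpa [constantCoeff_eq_zero i hi] using (Polynomial.X_mul_divX_add (c i)).symm
      have hsum : ∑ i ∈ s, (c i).divX • v i = 0 := by
        refine hX.right_eq_zero_of_smul ?_
        rw [Finset.smul_sum, ← hc]
        exact Finset.sum_congr rfl fun i hi => by rw [smul_smul, ← hdivX i hi]
      intro i hi
      rw [hdivX i hi, pow_succ']
      exact mul_dvd_mul_left _ (ih _ hsum i hi)
  intro c hc i hi
  ext n
  exact Polynomial.X_pow_dvd_iff.1 (X_pow_dvd (n + 1) c hc i hi) n n.lt_succ_self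

theorem span_range_mk_monomial_eq_top {σ R : Type*} [CommRing R] (I : Ideal (MvPolynomial σ R)) :
    Submodule.span R (Set.range fun m => Ideal.Quotient.mk I (monomial m 1)) = ⊤ := by
  have range_mk : LinearMap.range (Ideal.Quotient.mkₐ R I).toLinearMap = ⊤ :=
    LinearMap.range_eq_top.2 (Ideal.Quotient.mkₐ_surjective R I)
  rw [← range_mk, ← Submodule.map_top, ← (basisMonomials σ R).span_eq, Submodule.map_span,
    ← Set.range_comp]
  simp [Function.comp_def]

theorem exists_basis_eq_of_span_range_eq_top {ι K V : Type*} [DivisionRing K] [AddCommGroup V]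
    [Module K V] {v : ι → V} (hv : Submodule.span K (Set.range v) = ⊤) :
    ∃ (s : Set ι) (b : Module.Basis s K V), ∀ i : s, b i = v i := by
  obtain ⟨s, -, -, hspan, hindep⟩ :=
    exists_linearIndepOn_extension (linearIndepOn_empty K v) (Set.subset_univ ∅)
  refine ⟨s, .mk hindep ?_, Module.Basis.mk_apply _ _⟩
  rwa [Set.image_univ, Set.image_eq_range, ← Submodule.span_le, hv] at hspan

theorem span_range_sup_restrictScalars_eq_top {R A ι : Type*} [CommRing R] [CommRing A]
    [Algebra R A] {I : Ideal A} {p : ι → A}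
    (hp : Submodule.span R (Set.range fun i => Ideal.Quotient.mk I (p i)) = ⊤) :
    Submodule.span R (Set.range p) ⊔ I.restrictScalars R = ⊤ := by
  have ker_mk : LinearMap.ker (Ideal.Quotient.mkₐ R I).toLinearMap = I.restrictScalars R := by
    ext a
    simp [Ideal.Quotient.eq_zero_iff_mem]
  have map_span :
      (Submodule.span R (Set.range p)).map (Ideal.Quotient.mkₐ R I).toLinearMap = ⊤ := by
    rw [Submodule.map_span, ← Set.range_comp]
    exact hp
  rw [← ker_mk, ← Submodule.comap_map_eq, map_span, Submodule.comap_top]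

end Freeness

theorem mem_of_nsmul_mem {K M : Type*} [DivisionRing K] [CharZero K] [AddCommGroup M] [Module K M]
    {N : Submodule K M} {x : M} {n : ℕ} (hn : n ≠ 0) (h : n • x ∈ N) : x ∈ N := by
  rwa [← Nat.cast_smul_eq_nsmul K, N.smul_mem_iff (Nat.cast_ne_zero.2 hn)] at h

theorem X_mem_radical_span_range {σ ι K : Type*} [Finite σ] [Field K] [IsAlgClosed K]
    {a : ι → MvPolynomial σ K} (ha : ∀ p, (∀ j, eval p (a j) = 0) → p = 0) (i : σ) :
    X i ∈ (Ideal.span (Set.range a)).radical := by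
  rw [← vanishingIdeal_zeroLocus_eq_radical (K := K), mem_vanishingIdeal_iff]
  intro p hp
  have hp0 : p = 0 := ha p fun j => by
    simpa [aeval_eq_eval] using mem_zeroLocus_iff.1 hp (a j) (Ideal.subset_span ⟨j, rfl⟩)
  simp [hp0]

section VectorCalculus

variable {σ R : Type*} [CommRing R]

/-- The gradient of a polynomial, as a vector of polynomials. -/
noncomputable def grad (p : MvPolynomial σ R) : σ → MvPolynomial σ R :=
  fun i => pderiv i p

/-- The divergence of a polynomial vector field. -/
noncomputable def divergence [Fintype σ] (F : σ → MvPolynomial σ R) : MvPolynomial σ R :=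
  ∑ i, pderiv i (F i)

/-- The curl of a polynomial vector field in three variables. -/
noncomputable def curl :
    (Fin 3 → MvPolynomial (Fin 3) R) →ₗ[R] (Fin 3 → MvPolynomial (Fin 3) R) where
  toFun F := ![pderiv 1 (F 2) - pderiv 2 (F 1), pderiv 2 (F 0) - pderiv 0 (F 2),
    pderiv 0 (F 1) - pderiv 1 (F 0)]
  map_add' F G := by
    ext1 i
    fin_cases i <;>
      simp only [Pi.add_apply, map_add, Matrix.cons_val, Fin.reduceFinMk, Fin.zero_eta, Fin.mk_one,
        Fin.isValue] <;>
      ring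
  map_smul' c F := by
    ext1 i
    fin_cases i <;> simp [smul_sub]

theorem curl_apply (F : Fin 3 → MvPolynomial (Fin 3) R) :
    curl F = ![pderiv 1 (F 2) - pderiv 2 (F 1), pderiv 2 (F 0) - pderiv 0 (F 2),
      pderiv 0 (F 1) - pderiv 1 (F 0)] :=
  rfl

theorem pderiv_pderiv_comm (i j : σ) (p : MvPolynomial σ R) :
    pderiv i (pderiv j p) = pderiv j (pderiv i p) := by
  suffices (⁅pderiv i, pderiv j⁆ : Derivation R (MvPolynomial σ R) (MvPolynomial σ R)) = 0 by
    rw [← sub_eq_zero, ← Derivation.commutator_apply, this, Derivation.zero_apply]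
  classical
  refine derivation_ext fun k => ?_
  simp only [Derivation.commutator_apply, pderiv_X, Pi.single_apply, apply_ite, map_zero,
    pderiv_one, ite_self, sub_self, Derivation.zero_apply]

theorem curl_grad (p : MvPolynomial (Fin 3) R) : curl (grad p) = 0 := by
  ext1 i
  fin_cases i <;> simp [curl_apply, grad, pderiv_pderiv_comm]

theorem divergence_curl (F : Fin 3 → MvPolynomial (Fin 3) R) : divergence (curl F) = 0 := by
  simp only [divergence, curl_apply, Fin.sum_univ_three, Matrix.cons_val, map_sub]
  rw [pderiv_pderiv_comm 1 0, pderiv_pderiv_comm 2 0, pderiv_pderiv_comm 2 1]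
  ring

theorem divergence_sub [Fintype σ] (F G : σ → MvPolynomial σ R) :
    divergence (F - G) = divergence F - divergence G := by
  simp [divergence]

theorem curl_smul (p : MvPolynomial (Fin 3) R) (F : Fin 3 → MvPolynomial (Fin 3) R) :
    curl (p • F) = p • curl F + grad p ⨯₃ F := by
  ext1 i
  fin_cases i <;>
    simp only [curl_apply, cross_apply, grad, Pi.add_apply, Pi.smul_apply, smul_eq_mul, pderiv_mul,
      Matrix.cons_val, Fin.reduceFinMk, Fin.zero_eta, Fin.mk_one, Fin.isValue] <;>
    ring

theorem divergence_crossProduct (F G : Fin 3 → MvPolynomial (Fin 3) R) :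
    divergence (F ⨯₃ G) = curl F ⬝ᵥ G - F ⬝ᵥ curl G := by
  simp only [divergence, curl_apply, cross_apply, Matrix.vec3_dotProduct, Fin.sum_univ_three,
    Matrix.cons_val, map_sub, pderiv_mul]
  ring

theorem X_dotProduct_grad [Fintype σ] {p : MvPolynomial σ R} {n : ℕ} (hp : p.IsHomogeneous n) :
    X ⬝ᵥ grad p = n • p :=
  hp.sum_X_mul_pderiv

theorem divergence_smul_X [Fintype σ] {p : MvPolynomial σ R} {n : ℕ} (hp : p.IsHomogeneous n) :
    divergence (p • X) = (n + Fintype.card σ) • p := by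
  rw [add_smul, ← X_dotProduct_grad hp]
  simp only [divergence, grad, dotProduct, Pi.smul_apply, smul_eq_mul, pderiv_mul, pderiv_X_self,
    mul_one, Finset.sum_add_distrib, Finset.sum_const, Finset.card_univ, mul_comm (X _),
    add_comm]

theorem curl_crossProduct_X {F : Fin 3 → MvPolynomial (Fin 3) R} {n : ℕ}
    (hF : ∀ i, (F i).IsHomogeneous n) :
    curl (F ⨯₃ X) = (n + 2) • F - divergence F • X := by
  have euler i := X_dotProduct_grad (hF i)
  simp only [Matrix.vec3_dotProduct, grad] at euler
  ext1 i
  fin_cases i <;>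
    simp only [curl_apply, cross_apply, divergence, Fin.sum_univ_three, Pi.sub_apply, Pi.smul_apply,
      smul_eq_mul, map_sub, pderiv_mul, pderiv_X, Pi.single_apply, Fin.isValue, Fin.reduceFinMk,
      Fin.reduceEq, Fin.zero_eta, Fin.mk_one, Matrix.cons_val, if_true, if_false] <;>
    linear_combination euler _

theorem curl_homogeneousComponent (n : ℕ) (F : Fin 3 → MvPolynomial (Fin 3) R) :
    curl (homogeneousComponent (n + 1) ∘ F) = homogeneousComponent n ∘ curl F := by
  ext1 i
  fin_cases i <;> simp [curl_apply, homogeneousComponent_pderiv]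

theorem isHomogeneous_divergence [Fintype σ] {F : σ → MvPolynomial σ R} {n : ℕ}
    (hF : ∀ i, (F i).IsHomogeneous n) : (divergence F).IsHomogeneous (n - 1) :=
  IsHomogeneous.sum _ _ _ fun i _ => (hF i).pderiv

end VectorCalculus

section Brieskorn

/-- The Jacobian ideal, generated by the partial derivatives. -/
noncomputable def jacobianIdeal {σ R : Type*} [CommRing R] (f : MvPolynomial σ R) :
    Ideal (MvPolynomial σ R) :=
  Ideal.span (Set.range (grad f))

theorem mem_jacobianIdeal_iff {σ R : Type*} [CommRing R] [Fintype σ] {f w : MvPolynomial σ R} :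
    w ∈ jacobianIdeal f ↔ ∃ F, grad f ⬝ᵥ F = w := by
  simp only [jacobianIdeal, Ideal.mem_span_range_iff_exists_fun, dotProduct, mul_comm]

/-- The subspace `E_f` over an arbitrary coefficient ring: writing `F` for the vector field
`(P, Q, R)`, it consists of the polynomials `∇f · curl F`. -/
noncomputable def brieskornSubmodule {R : Type*} [CommRing R] (f : MvPolynomial (Fin 3) R) :
    Submodule R (MvPolynomial (Fin 3) R) where
  carrier := Set.range fun F => grad f ⬝ᵥ curl F
  add_mem' := by
    rintro _ _ ⟨F, rfl⟩ ⟨G, rfl⟩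
    exact ⟨F + G, by simp only [map_add, dotProduct_add]⟩
  zero_mem' := ⟨0, by simp only [map_zero, dotProduct_zero]⟩
  smul_mem' := by
    rintro c _ ⟨F, rfl⟩
    exact ⟨c • F, by simp only [map_smul, dotProduct_smul]⟩

section CommRing

variable {R : Type*} [CommRing R] {f g w : MvPolynomial (Fin 3) R} {d : ℕ}

theorem grad_dotProduct_curl_mem_brieskornSubmodule (f : MvPolynomial (Fin 3) R)
    (F : Fin 3 → MvPolynomial (Fin 3) R) : grad f ⬝ᵥ curl F ∈ brieskornSubmodule f :=
  ⟨F, rfl⟩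

theorem brieskornSubmodule_le_jacobianIdeal (f : MvPolynomial (Fin 3) R) :
    brieskornSubmodule f ≤ (jacobianIdeal f).restrictScalars R := by
  rintro _ ⟨F, rfl⟩
  exact mem_jacobianIdeal_iff.2 ⟨curl F, rfl⟩

theorem mul_mem_brieskornSubmodule (hw : w ∈ brieskornSubmodule f) :
    f * w ∈ brieskornSubmodule f := by
  obtain ⟨F, rfl⟩ := hw
  exact ⟨f • F, by simp [curl_smul]⟩

theorem homogeneousComponent_mem_brieskornSubmodule (hf : f.IsHomogeneous d)
    (hw : w ∈ brieskornSubmodule f) (n : ℕ) :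
    homogeneousComponent n w ∈ brieskornSubmodule f := by
  obtain ⟨F, rfl⟩ := hw
  have hgrad (i) : (grad f i).IsHomogeneous (d - 1) := hf.pderiv
  obtain hn | hn := lt_or_ge n (d - 1)
  · simp [homogeneousComponent_dotProduct_of_lt hgrad hn]
  · refine ⟨homogeneousComponent (n - (d - 1) + 1) ∘ F, ?_⟩
    simp only [homogeneousComponent_dotProduct_of_le hgrad hn, curl_homogeneousComponent]

theorem nsmul_grad_dotProduct_sub_mem_brieskornSubmodule (hf : f.IsHomogeneous d)
    {F : Fin 3 → MvPolynomial (Fin 3) R} {n : ℕ} (hF : ∀ i, (F i).IsHomogeneous n) :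
    (n + 2) • (grad f ⬝ᵥ F) - d • (f * divergence F) ∈ brieskornSubmodule f := by
  refine ⟨F ⨯₃ X, ?_⟩
  simp only [curl_crossProduct_X hF, dotProduct_sub, dotProduct_smul, dotProduct_comm (grad f) X,
    X_dotProduct_grad hf, smul_eq_mul, mul_smul_comm, mul_comm f]

/-- Multiplication by `f` on the quotient by `brieskornSubmodule f`. -/
noncomputable def brieskornMul (f : MvPolynomial (Fin 3) R) :
    Module.End R (MvPolynomial (Fin 3) R ⧸ brieskornSubmodule f) :=
  (brieskornSubmodule f).mapQ _ (LinearMap.mulLeft R f) fun _ => mul_mem_brieskornSubmodule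

/-- The Brieskorn module of `f` over an arbitrary coefficient ring, with `Polynomial.X` acting as
multiplication by `f`. -/
abbrev BrieskornModule (f : MvPolynomial (Fin 3) R) : Type _ :=
  Module.AEval' (brieskornMul f)

namespace BrieskornModule

/-- The class of a polynomial in the Brieskorn module. -/
noncomputable def mk (f : MvPolynomial (Fin 3) R) :
    MvPolynomial (Fin 3) R →ₗ[R] BrieskornModule f :=
  (Module.AEval'.of (brieskornMul f)).toLinearMap ∘ₗ (brieskornSubmodule f).mkQ

theorem mk_surjective (f : MvPolynomial (Fin 3) R) : Function.Surjective (mk f) :=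
  (Module.AEval'.of (brieskornMul f)).surjective.comp (Submodule.mkQ_surjective _)

theorem mk_eq_zero_iff : mk f g = 0 ↔ g ∈ brieskornSubmodule f := by
  simp [mk]

theorem X_smul_mk (f g : MvPolynomial (Fin 3) R) :
    (Polynomial.X : Polynomial R) • mk f g = mk f (f * g) :=
  Module.AEval'.X_smul_of (brieskornMul f) _

/-- The projection of the Brieskorn module onto the Milnor algebra, which is its reduction
modulo `Polynomial.X`. -/
noncomputable def toMilnorAlgebra (f : MvPolynomial (Fin 3) R) :
    BrieskornModule f →ₗ[R] MvPolynomial (Fin 3) R ⧸ jacobianIdeal f :=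
  (brieskornSubmodule f).mapQ ((jacobianIdeal f).restrictScalars R) LinearMap.id
      (brieskornSubmodule_le_jacobianIdeal f) ∘ₗ
    (Module.AEval'.of (brieskornMul f)).symm.toLinearMap

theorem toMilnorAlgebra_mk (f g : MvPolynomial (Fin 3) R) :
    toMilnorAlgebra f (mk f g) = Ideal.Quotient.mk (jacobianIdeal f) g :=
  rfl

end BrieskornModule

end CommRing

section CharZero

variable {K : Type*} [Field K] [CharZero K]

theorem mem_jacobianIdeal_self {σ : Type*} [Finite σ] {f : MvPolynomial σ K} {d : ℕ}
    (hf : f.IsHomogeneous d) (hd : d ≠ 0) : f ∈ jacobianIdeal f := by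
  cases nonempty_fintype σ
  refine mem_of_nsmul_mem (N := (jacobianIdeal f).restrictScalars K) hd ?_
  exact mem_jacobianIdeal_iff.2 ⟨X, by rw [dotProduct_comm, X_dotProduct_grad hf]⟩

variable {f g : MvPolynomial (Fin 3) K} {d : ℕ}

theorem mem_brieskornSubmodule_of_isHomogeneous_of_mul_mem (hf : f.IsHomogeneous d)
    (hX : ∀ i, X i ∈ (jacobianIdeal f).radical) {m : ℕ} (hg : g.IsHomogeneous m)
    (hfg : f * g ∈ brieskornSubmodule f) : g ∈ brieskornSubmodule f := by
  obtain ⟨F, hF : grad f ⬝ᵥ curl F = f * g⟩ := hfg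
  have orthogonal : grad f ⬝ᵥ (g • X - curl (d • F)) = 0 := by
    rw [map_nsmul, dotProduct_sub, dotProduct_smul, dotProduct_smul, hF, dotProduct_comm,
      X_dotProduct_grad hf, smul_eq_mul, mul_smul_comm, mul_comm, sub_self]
  obtain ⟨G, hG⟩ := exists_eq_crossProduct_of_X_mem_radical hX orthogonal
  have hdiv : (m + 3) • g = -(grad f ⬝ᵥ curl G) := by
    simpa [divergence_sub, divergence_smul_X hg, divergence_curl, divergence_crossProduct,
      curl_grad] using congrArg divergence hG
  refine mem_of_nsmul_mem (n := m + 3) (by lia) ?_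
  rw [hdiv]
  exact neg_mem (grad_dotProduct_curl_mem_brieskornSubmodule f G)

theorem mem_brieskornSubmodule_of_mul_mem (hf : f.IsHomogeneous d)
    (hX : ∀ i, X i ∈ (jacobianIdeal f).radical) (hfg : f * g ∈ brieskornSubmodule f) :
    g ∈ brieskornSubmodule f := by
  refine mem_of_forall_homogeneousComponent_mem fun n =>
    mem_brieskornSubmodule_of_isHomogeneous_of_mul_mem hf hX
      (homogeneousComponent_isHomogeneous n g) ?_
  have := homogeneousComponent_mem_brieskornSubmodule hf hfg (d + n)
  rwa [homogeneousComponent_mul_of_le hf (Nat.le_add_right d n), Nat.add_sub_cancel_left] at this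

theorem grad_dotProduct_mem (hf : f.IsHomogeneous d) {N : Submodule K (MvPolynomial (Fin 3) K)}
    (hEN : brieskornSubmodule f ≤ N) (hfN : ∀ g ∈ N, f * g ∈ N)
    {F : Fin 3 → MvPolynomial (Fin 3) K} {n : ℕ} (hF : ∀ i, (F i).IsHomogeneous n)
    (hdiv : divergence F ∈ N) : grad f ⬝ᵥ F ∈ N :=
  mem_of_nsmul_mem (n := n + 2) (by lia) <|
    (N.sub_mem_iff_left (N.smul_of_tower_mem d (hfN _ hdiv))).1 <|
      hEN (nsmul_grad_dotProduct_sub_mem_brieskornSubmodule hf hF)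

theorem eq_top_of_brieskornSubmodule_le (hd : 1 < d) (hf : f.IsHomogeneous d)
    {N V : Submodule K (MvPolynomial (Fin 3) K)} (hEN : brieskornSubmodule f ≤ N)
    (hfN : ∀ g ∈ N, f * g ∈ N) (hVN : V ≤ N)
    (hV : ∀ g ∈ V, ∀ n, homogeneousComponent n g ∈ V)
    (hVJ : V ⊔ (jacobianIdeal f).restrictScalars K = ⊤) : N = ⊤ := by
  have hgrad (i) : (grad f i).IsHomogeneous (d - 1) := hf.pderiv
  suffices homogeneous_mem : ∀ n, ∀ g : MvPolynomial (Fin 3) K, g.IsHomogeneous n → g ∈ N from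
    eq_top_iff.2 fun g _ => mem_of_forall_homogeneousComponent_mem fun n =>
      homogeneous_mem n _ (homogeneousComponent_isHomogeneous n g)
  intro n
  induction n using Nat.strong_induction_on with
  | _ n ih =>
    intro g hg
    obtain ⟨v, hv, w, hw, rfl⟩ := Submodule.mem_sup.1 (hVJ ▸ Submodule.mem_top (x := g))
    obtain ⟨F, rfl⟩ := mem_jacobianIdeal_iff.1 hw
    rw [← homogeneousComponent_eq_self hg, map_add]
    refine N.add_mem (hVN (hV v hv n)) ?_
    obtain hn | hn := lt_or_ge n (d - 1)
    · simp [homogeneousComponent_dotProduct_of_lt hgrad hn]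
    · rw [homogeneousComponent_dotProduct_of_le hgrad hn]
      have hF (i) := homogeneousComponent_isHomogeneous (n - (d - 1)) (F i)
      exact grad_dotProduct_mem hf hEN hfN hF (ih _ (by lia) _ (isHomogeneous_divergence hF))

namespace BrieskornModule

theorem isSMulRegular_X (hf : f.IsHomogeneous d) (hX : ∀ i, X i ∈ (jacobianIdeal f).radical) :
    IsSMulRegular (BrieskornModule f) (Polynomial.X : Polynomial K) := by
  refine isSMulRegular_iff_right_eq_zero_of_smul.2 fun b hb => ?_
  obtain ⟨g, rfl⟩ := mk_surjective f b
  rw [X_smul_mk, mk_eq_zero_iff] at hb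
  exact mk_eq_zero_iff.2 (mem_brieskornSubmodule_of_mul_mem hf hX hb)

theorem toMilnorAlgebra_X_smul (hf : f.IsHomogeneous d) (hd : d ≠ 0) (b : BrieskornModule f) :
    toMilnorAlgebra f ((Polynomial.X : Polynomial K) • b) = 0 := by
  obtain ⟨g, rfl⟩ := mk_surjective f b
  rw [X_smul_mk, toMilnorAlgebra_mk, Ideal.Quotient.eq_zero_iff_mem]
  exact Ideal.mul_mem_right _ _ (mem_jacobianIdeal_self hf hd)

theorem span_range_mk_eq_top (hd : 1 < d) (hf : f.IsHomogeneous d) {ι : Type*}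
    {p : ι → MvPolynomial (Fin 3) K} (hp : ∀ i, ∃ k, (p i).IsHomogeneous k)
    (hpJ : Submodule.span K (Set.range p) ⊔ (jacobianIdeal f).restrictScalars K = ⊤) :
    Submodule.span (Polynomial K) (Set.range fun i => mk f (p i)) = ⊤ := by
  set B := Submodule.span (Polynomial K) (Set.range fun i => mk f (p i))
  suffices (B.restrictScalars K).comap (mk f) = ⊤ from eq_top_iff.2 fun b _ => by
    obtain ⟨g, rfl⟩ := mk_surjective f b
    exact this.ge (Submodule.mem_top (x := g))
  refine eq_top_of_brieskornSubmodule_le hd hf (fun g hg => ?_) (fun g hg => ?_) ?_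
    (fun g hg n => homogeneousComponent_mem_span (Set.forall_mem_range.2 hp) hg n) hpJ
  · simp [mk_eq_zero_iff.2 hg]
  · rw [Submodule.mem_comap, ← X_smul_mk]
    exact B.smul_mem _ hg
  · exact Submodule.span_le.2 <| Set.range_subset_iff.2 fun i => Submodule.subset_span ⟨i, rfl⟩

end BrieskornModule

end CharZero

end Brieskorn

theorem statement3_general {K : Type*} [Field K] [CharZero K] (f : MvPolynomial (Fin 3) K) (d : ℕ)
    (hd : 1 < d) (hf : f.IsHomogeneous d) (hX : ∀ i, X i ∈ (jacobianIdeal f).radical) :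
    Module.Free (Polynomial K) (BrieskornModule f) ∧
      Module.rank (Polynomial K) (BrieskornModule f) =
        Module.rank K (MvPolynomial (Fin 3) K ⧸ jacobianIdeal f) := by
  obtain ⟨s, b, hb⟩ := exists_basis_eq_of_span_range_eq_top
    (span_range_mk_monomial_eq_top (jacobianIdeal f))
  let v : s → BrieskornModule f := fun m => BrieskornModule.mk f (monomial m 1)
  have hvb : BrieskornModule.toMilnorAlgebra f ∘ v = b := funext fun m => (hb m).symm
  have hindep : LinearIndependent (Polynomial K) v :=
    linearIndependent_polynomial_of_comp
      (BrieskornModule.toMilnorAlgebra_X_smul hf (Nat.ne_zero_of_lt hd))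
      (BrieskornModule.isSMulRegular_X hf hX) (hvb ▸ b.linearIndependent)
  have hspan : Submodule.span (Polynomial K) (Set.range v) = ⊤ :=
    BrieskornModule.span_range_mk_eq_top hd hf (fun m => ⟨_, isHomogeneous_monomial _ rfl⟩) <|
      span_range_sup_restrictScalars_eq_top (by simp only [← hb]; exact b.span_eq)
  let B := Module.Basis.mk hindep hspan.ge
  exact ⟨.of_basis B, Cardinal.lift_injective (B.mk_eq_rank.symm.trans b.mk_eq_rank)⟩

theorem Emap_eq_grad_dotProduct_curl (f P Q R : MvPolynomial (Fin 3) ℂ) :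
    Emap f (P, Q, R) = grad f ⬝ᵥ curl ![P, Q, R] := by
  simp only [Emap, LinearMap.coe_mk, AddHom.coe_mk, grad, curl_apply, Matrix.vec3_dotProduct,
    Matrix.cons_val]

theorem Esub_eq_brieskornSubmodule (f : MvPolynomial (Fin 3) ℂ) :
    Esub f = brieskornSubmodule f := by
  ext w
  constructor
  · rintro ⟨⟨P, Q, R⟩, rfl⟩
    exact ⟨![P, Q, R], (Emap_eq_grad_dotProduct_curl f P Q R).symm⟩
  · rintro ⟨F, rfl⟩
    exact ⟨(F 0, F 1, F 2), Emap_eq_grad_dotProduct_curl f (F 0) (F 1) (F 2)⟩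

/-- The identification of the `ℂ[t]`-module `ℂ[x,y,z]/E_f` with `BrieskornModule f`, induced by the
equality of the subspaces divided out. -/
noncomputable def aevalBmulEquiv (f : MvPolynomial (Fin 3) ℂ) :
    Module.AEval' (Bmul f) ≃ₗ[Polynomial ℂ] BrieskornModule f :=
  LinearEquiv.ofAEval (Bmul f)
    (Submodule.quotEquivOfEq _ _ (Esub_eq_brieskornSubmodule f) ≪≫ₗ
      Module.AEval'.of (brieskornMul f)) <|
    (Submodule.mkQ_surjective _).forall.2 fun g => (BrieskornModule.X_smul_mk f g).symm

theorem jacobianIdeal_eq_span {R : Type*} [CommRing R] (f : MvPolynomial (Fin 3) R) :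
    jacobianIdeal f = Ideal.span {pderiv 0 f, pderiv 1 f, pderiv 2 f} := by
  have range_grad : Set.range (grad f) = {pderiv 0 f, pderiv 1 f, pderiv 2 f} := by
    ext p
    simp [grad, Fin.exists_fin_succ, eq_comm]
  rw [jacobianIdeal, range_grad]

/-- For `f ∈ ℂ[x,y,z]` homogeneous of degree `d > 1` with an isolated
singularity at the origin, the Brieskorn module `B(f) = ℂ[x,y,z]/E_f`, as a
`ℂ[t]`-module with `t` acting by multiplication by `f`, is free of rank
`μ(f) = dim_ℂ ℂ[x,y,z]/J_f`. -/
theorem statement3 (f : MvPolynomial (Fin 3) ℂ) (d : ℕ) (hd : 1 < d)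
    (hf : f.IsHomogeneous d)
    (hiso : ∀ p : Fin 3 → ℂ,
      eval p (pderiv 0 f) = 0 → eval p (pderiv 1 f) = 0 → eval p (pderiv 2 f) = 0 →
        p = 0) :
    Module.Free (Polynomial ℂ) (Module.AEval' (Bmul f)) ∧
      Module.rank (Polynomial ℂ) (Module.AEval' (Bmul f)) =
        Module.rank ℂ
          (MvPolynomial (Fin 3) ℂ ⧸
            Ideal.span ({pderiv 0 f, pderiv 1 f, pderiv 2 f} :
              Set (MvPolynomial (Fin 3) ℂ))) := by
  obtain ⟨hfree, hrank⟩ := statement3_general f d hd hf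
    (X_mem_radical_span_range fun p hp => hiso p (hp 0) (hp 1) (hp 2))
  rw [(aevalBmulEquiv f).rank_eq, ← jacobianIdeal_eq_span]
  exact ⟨.of_equiv (aevalBmulEquiv f).symm, hrank⟩
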